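/- arXiv:2105.12272 — 3 statements merged into one kernel-verified Lean document; each statement's English description precedes it below -/
import Mathlib

section
/- Performance difference lemma for action-independent rewards: Let π1 and π2 be any two policies in a finite MDP whose reward is action-independent, i.e. R(s,a1) = R(s,a2) for all s∈S and a1,a2∈A. Then PerfDiff(π2, π1) ≤ (γ R_max/(1−γ)²) · Err_{d^{π1}}(π1, π2, P). -/
open Finset

noncomputable section

variable {S A Z : Type*}

/-- State distribution at time `t` when following policy `π` from initial distribution `μ`. -/
def stateDist [Fintype S] [Fintype A] (P : S → A → S → ℝ) (π : S → A → ℝ)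
    (μ : S → ℝ) : ℕ → S → ℝ
  | 0 => μ
  | t + 1 => fun s' => ∑ s : S, ∑ a : A, π s a * P s a s' * stateDist P π μ t s

/-- Discounted visitation distribution `d^π`. -/
def visitation [Fintype S] [Fintype A] (P : S → A → S → ℝ) (π : S → A → ℝ)
    (μ : S → ℝ) (γ : ℝ) (s : S) : ℝ :=
  (1 - γ) * ∑' t : ℕ, γ ^ t * stateDist P π μ t s

/-- Performance `J(π)`. -/
def perf [Fintype S] [Fintype A] (P : S → A → S → ℝ) (R : S → A → ℝ)
    (π : S → A → ℝ) (μ : S → ℝ) (γ : ℝ) : ℝ :=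
  ∑' t : ℕ, γ ^ t * ∑ s : S, ∑ a : A, R s a * π s a * stateDist P π μ t s

/-- `PerfDiff(π, π')`. -/
def perfDiff [Fintype S] [Fintype A] (P : S → A → S → ℝ) (R : S → A → ℝ)
    (μ : S → ℝ) (γ : ℝ) (π π' : S → A → ℝ) : ℝ :=
  |perf P R π μ γ - perf P R π' μ γ|

/-- Total variation distance. -/
def dTV {X : Type*} [Fintype X] (p q : X → ℝ) : ℝ :=
  (1 / 2) * ∑ x : X, |p x - q x|

/-- KL divergence. -/
def dKL {X : Type*} [Fintype X] (p q : X → ℝ) : ℝ :=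
  ∑ x : X, p x * Real.log (p x / q x)

/-- Pearson chi-squared divergence (terms with `q x = 0` vanish by the `x / 0 = 0` convention). -/
def dChi2 {X : Type*} [Fintype X] (p q : X → ℝ) : ℝ :=
  ∑ x : X, (p x - q x) ^ 2 / q x

/-- `Err_ρ(π1, π2, F)` for a reward-like function `F`. -/
def errF [Fintype S] [Fintype A] (ρ : S → ℝ) (π1 π2 : S → A → ℝ) (F : S → A → ℝ) : ℝ :=
  |∑ s : S, ρ s * ∑ a : A, (π1 s a - π2 s a) * F s a|

/-- `Err_ρ(π1, π2, G)` for a transition-like function `G`. -/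
def errG [Fintype S] [Fintype A] (ρ : S → ℝ) (π1 π2 : S → A → ℝ) (G : S → A → S → ℝ) : ℝ :=
  ∑ s' : S, |∑ s : S, ρ s * ∑ a : A, (π1 s a - π2 s a) * G s a s'|

/-- Marginalization `ρ_Z` of a state distribution onto `Z` via `φ`. -/
def margDist [Fintype S] [DecidableEq Z] (φ : S → Z) (ρ : S → ℝ) (z : Z) : ℝ :=
  ∑ s : S, if φ s = z then ρ s else 0

/-- Marginalization `π_Z` of a policy onto `Z` via `φ`, w.r.t. the state distribution `ρ`
(by the `x / 0 = 0` convention it takes a fixed arbitrary value when `ρ_Z(z) = 0`). -/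
def margPolicy [Fintype S] [DecidableEq Z] (φ : S → Z) (ρ : S → ℝ) (π : S → A → ℝ)
    (z : Z) (a : A) : ℝ :=
  (∑ s : S, if φ s = z then ρ s * π s a else 0) / margDist φ ρ z

/-- Log-linear (softmax) policy `π_θ(a|z)`. -/
def softmaxPol {d : ℕ} [Fintype A] (θ : A → Fin d → ℝ) (z : Fin d → ℝ) (a : A) : ℝ :=
  Real.exp (∑ i, θ a i * z i) / ∑ b : A, Real.exp (∑ i, θ b i * z i)

/-- Sum of absolute values of all partial derivatives of `L : ℝ^{d×|A|} → ℝ` at `θ`. -/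
def gradL1 {d : ℕ} [Fintype A] [DecidableEq A] (L : (A → Fin d → ℝ) → ℝ)
    (θ : A → Fin d → ℝ) : ℝ :=
  ∑ a : A, ∑ i : Fin d, |fderiv ℝ L θ (Pi.single a (Pi.single i 1))|

theorem stateDist_bdd [Fintype S] [Fintype A]
    (P : S → A → S → ℝ) (hP0 : ∀ s a s', 0 ≤ P s a s')
    (hP1 : ∀ s a, ∑ s' : S, P s a s' = 1)
    (μ : S → ℝ) (hμ0 : ∀ s, 0 ≤ μ s) (hμ1 : ∑ s : S, μ s = 1)
    (π : S → A → ℝ) (h0 : ∀ s a, 0 ≤ π s a) (h1 : ∀ s, ∑ a : A, π s a = 1) (t : ℕ) :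
    (∀ s, 0 ≤ stateDist P π μ t s) ∧ ∑ s, stateDist P π μ t s = 1 := by
  induction t with
  | zero => exact ⟨hμ0, hμ1⟩
  | succ t ih =>
    refine ⟨fun s => ?_, ?_⟩
    · exact Finset.sum_nonneg fun s' _ => Finset.sum_nonneg fun a _ =>
        mul_nonneg (mul_nonneg (h0 _ _) (hP0 _ _ _)) (ih.1 _)
    · simp only [stateDist]
      rw [Finset.sum_comm]
      rw [← ih.2]
      refine Finset.sum_congr rfl fun s _ => ?_
      rw [Finset.sum_comm]
      have : ∀ a, ∑ x, π s a * P s a x * stateDist P π μ t s = π s a * stateDist P π μ t s := by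
        intro a
        rw [← Finset.sum_mul, ← Finset.mul_sum, hP1, mul_one]
      simp only [this]
      rw [← Finset.sum_mul, h1, one_mul]

theorem stateDist_summable [Fintype S] [Fintype A]
    (P : S → A → S → ℝ) (hP0 : ∀ s a s', 0 ≤ P s a s')
    (hP1 : ∀ s a, ∑ s' : S, P s a s' = 1)
    (μ : S → ℝ) (hμ0 : ∀ s, 0 ≤ μ s) (hμ1 : ∑ s : S, μ s = 1)
    (γ : ℝ) (hγ0 : 0 ≤ γ) (hγ1 : γ < 1)
    (π : S → A → ℝ) (h0 : ∀ s a, 0 ≤ π s a) (h1 : ∀ s, ∑ a : A, π s a = 1) (s : S) :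
    Summable fun t => γ ^ t * stateDist P π μ t s := by
  have hb := stateDist_bdd P hP0 hP1 μ hμ0 hμ1 π h0 h1
  refine Summable.of_nonneg_of_le (fun t => mul_nonneg (pow_nonneg hγ0 t) ((hb t).1 s))
    (fun t => ?_) (summable_geometric_of_lt_one hγ0 hγ1)
  have : stateDist P π μ t s ≤ 1 := by
    rw [← (hb t).2]
    exact Finset.single_le_sum (fun i _ => (hb t).1 i) (Finset.mem_univ s)
  exact mul_le_of_le_one_right (pow_nonneg hγ0 t) this

/-- unnormalised occupancy -/
def occ [Fintype S] [Fintype A] (P : S → A → S → ℝ) (π : S → A → ℝ)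
    (μ : S → ℝ) (γ : ℝ) (s : S) : ℝ := ∑' t : ℕ, γ ^ t * stateDist P π μ t s

theorem occ_eq [Fintype S] [Fintype A]
    (P : S → A → S → ℝ) (μ : S → ℝ) (γ : ℝ) (π : S → A → ℝ)
    (hs : ∀ s, Summable fun t => γ ^ t * stateDist P π μ t s) (s' : S) :
    occ P π μ γ s' = μ s' + γ * ∑ s, occ P π μ γ s * ∑ a, π s a * P s a s' := by
  unfold occ
  rw [(hs s').tsum_eq_zero_add]
  have h : HasSum (fun t => γ ^ (t + 1) * stateDist P π μ (t + 1) s')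
      (γ * ∑ s, (∑' t : ℕ, γ ^ t * stateDist P π μ t s) * ∑ a, π s a * P s a s') := by
    have := (hasSum_sum (s := Finset.univ) fun s _ =>
      (hs s).hasSum.mul_right (∑ a, π s a * P s a s')).mul_left γ
    refine Eq.mp (congrArg (fun f => HasSum f _) (funext fun t => ?_)) this
    symm
    simp only [stateDist, pow_succ, Finset.mul_sum]
    refine Finset.sum_congr rfl fun s _ => Finset.sum_congr rfl fun a _ => ?_
    ring
  rw [h.tsum_eq]
  simp [stateDist]

theorem perf_eq [Fintype S] [Fintype A]
    (P : S → A → S → ℝ) (R : S → A → ℝ) (μ : S → ℝ) (γ : ℝ) (π : S → A → ℝ)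
    (r : S → ℝ) (hr : ∀ s a, R s a = r s) (h1 : ∀ s, ∑ a : A, π s a = 1)
    (hs : ∀ s, Summable fun t => γ ^ t * stateDist P π μ t s) :
    perf P R π μ γ = ∑ s, occ P π μ γ s * r s := by
  unfold perf occ
  have := (hasSum_sum (s := Finset.univ) fun s _ => (hs s).hasSum.mul_right (r s))
  rw [← this.tsum_eq]
  congr 1
  funext t
  rw [Finset.mul_sum]
  refine Finset.sum_congr rfl fun s _ => ?_
  simp only [hr]
  rw [← Finset.sum_mul, ← Finset.mul_sum, h1]
  ring

theorem performance_difference_lemma_action_independent_rewards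
    [Fintype S] [Fintype A] [Nonempty S] [Nonempty A]
    (P : S → A → S → ℝ) (hP0 : ∀ s a s', 0 ≤ P s a s')
    (hP1 : ∀ s a, ∑ s' : S, P s a s' = 1)
    (R : S → A → ℝ) (Rmax : ℝ) (hRmax : 0 ≤ Rmax) (hR : ∀ s a, |R s a| ≤ Rmax)
    (μ : S → ℝ) (hμ0 : ∀ s, 0 ≤ μ s) (hμ1 : ∑ s : S, μ s = 1)
    (γ : ℝ) (hγ0 : 0 ≤ γ) (hγ1 : γ < 1)
    (hRa : ∀ s a1 a2, R s a1 = R s a2)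
    (π1 π2 : S → A → ℝ)
    (hπ10 : ∀ s a, 0 ≤ π1 s a) (hπ11 : ∀ s, ∑ a : A, π1 s a = 1)
    (hπ20 : ∀ s a, 0 ≤ π2 s a) (hπ21 : ∀ s, ∑ a : A, π2 s a = 1) :
    perfDiff P R μ γ π2 π1 ≤
      (γ * Rmax / (1 - γ) ^ 2) * errG (visitation P π1 μ γ) π1 π2 P := by
  have hs1 := stateDist_summable P hP0 hP1 μ hμ0 hμ1 γ hγ0 hγ1 π1 hπ10 hπ11
  have hs2 := stateDist_summable P hP0 hP1 μ hμ0 hμ1 γ hγ0 hγ1 π2 hπ20 hπ21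
  obtain ⟨a0⟩ := ‹Nonempty A›
  have hr : ∀ s a, R s a = R s a0 := fun s a => hRa s a a0
  have hg : 0 < 1 - γ := by linarith
  unfold perfDiff
  rw [perf_eq P R μ γ π2 _ hr hπ21 hs2, perf_eq P R μ γ π1 _ hr hπ11 hs1]
  have e1 := occ_eq P μ γ π1 hs1
  have e2 := occ_eq P μ γ π2 hs2
  have hv : ∀ s, visitation P π1 μ γ s = (1 - γ) * occ P π1 μ γ s := fun s => rfl
  set D1 := occ P π1 μ γ
  set D2 := occ P π2 μ γ
  set E := ∑ s' : S, |∑ s : S, D1 s * ∑ a : A, (π1 s a - π2 s a) * P s a s'| with hE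
  have hErr : errG (visitation P π1 μ γ) π1 π2 P = (1 - γ) * E := by
    unfold errG
    rw [hE, Finset.mul_sum]
    refine Finset.sum_congr rfl fun s' _ => ?_
    simp only [hv, mul_assoc]
    rw [← Finset.mul_sum, abs_mul, abs_of_pos hg]
  set N := ∑ s, |D2 s - D1 s| with hN
  have hrec : ∀ s', D2 s' - D1 s' = γ * (∑ s, (D2 s - D1 s) * ∑ a, π2 s a * P s a s')
      - γ * ∑ s : S, D1 s * ∑ a : A, (π1 s a - π2 s a) * P s a s' := by
    intro s'
    rw [e1 s', e2 s', add_sub_add_left_eq_sub, ← mul_sub, ← mul_sub, ← Finset.sum_sub_distrib,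
      ← Finset.sum_sub_distrib]
    congr 1
    refine Finset.sum_congr rfl fun s _ => ?_
    simp only [sub_mul (π1 _ _), Finset.sum_sub_distrib]
    ring
  have hN1 : N ≤ γ * N + γ * E := by
    have hb : ∀ s', |D2 s' - D1 s'| ≤ γ * (∑ s, |D2 s - D1 s| * ∑ a, π2 s a * P s a s')
        + γ * |∑ s : S, D1 s * ∑ a : A, (π1 s a - π2 s a) * P s a s'| := by
      intro s'
      rw [hrec s']
      refine (abs_sub _ _).trans ?_
      rw [abs_mul, abs_mul, abs_of_nonneg hγ0]
      gcongr
      refine (Finset.abs_sum_le_sum_abs _ _).trans (le_of_eq ?_)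
      refine Finset.sum_congr rfl fun s _ => ?_
      rw [abs_mul, abs_of_nonneg (Finset.sum_nonneg fun a _ => mul_nonneg (hπ20 _ _) (hP0 _ _ _))]
    calc N ≤ ∑ s', (γ * (∑ s, |D2 s - D1 s| * ∑ a, π2 s a * P s a s')
        + γ * |∑ s : S, D1 s * ∑ a : A, (π1 s a - π2 s a) * P s a s'|) :=
          Finset.sum_le_sum fun s' _ => hb s'
      _ = γ * N + γ * E := by
        rw [Finset.sum_add_distrib, ← Finset.mul_sum, ← Finset.mul_sum, Finset.sum_comm]
        congr 2
        refine Finset.sum_congr rfl fun s _ => ?_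
        rw [← Finset.mul_sum, Finset.sum_comm]
        simp only [← Finset.mul_sum, hP1, mul_one, hπ21]
  have hJ : |∑ s, D2 s * R s a0 - ∑ s, D1 s * R s a0| ≤ N * Rmax := by
    rw [← Finset.sum_sub_distrib, hN, Finset.sum_mul]
    refine (Finset.abs_sum_le_sum_abs _ _).trans (Finset.sum_le_sum fun s _ => ?_)
    rw [← sub_mul, abs_mul]
    exact mul_le_mul_of_nonneg_left (hR _ _) (abs_nonneg _)
  have hN2 : N ≤ γ * E / (1 - γ) := by
    rw [le_div_iff₀ hg]; linarith
  refine hJ.trans ((mul_le_mul_of_nonneg_right hN2 hRmax).trans (le_of_eq ?_))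
  rw [hErr]
  field_simp
end
end

section
/- On-policy latent imitation bound: Let π* be a policy in a finite MDP, Z a finite set, φ : S → Z, R_Z : Z×A → [−R_max, R_max], P_Z a function where P_Z(·|z,a) is a probability distribution on S for every (z,a), and π_Z a latent policy assigning to each z∈Z a probability distribution π_Z(·|z) on A with π_Z(a|z) > 0 for all a,z. Define ε = (1/(1−γ)) ∑_{s∈S} d^{π*}(s) ∑_{a∈A} |R(s,a) − R_Z(φ(s),a)| + (2γ R_max/(1−γ)²) ∑_{s∈S} d^{π*}(s) ∑_{a∈A} D_TV(P(·|s,a) ‖ P_Z(·|φ(s),a)). Then, letting π_Z∘φ denote the policy s ↦ π_Z(·|φ(s)), PerfDiff(π_Z∘φ, π*) ≤ ε + (2R_max/(1−γ)²) · √( (1/2) ∑_{z∈Z} d^{π*}_Z(z) D_KL(π_{*,Z}(·|z) ‖ π_Z(·|z)) ), where d^{π*}_Z and π_{*,Z} are the marginalizations onto Z with respect to d^{π*}. -/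
open Finset

noncomputable section

variable {S A Z : Type*}

lemma log_lower {x : ℝ} (hx : 0 < x) :
    (x - 1) * (5 * x + 1) / (2 * x * (x + 2)) ≤ Real.log x := by
  set f : ℝ → ℝ := fun y => Real.log y - (y - 1) * (5 * y + 1) / (2 * y * (y + 2)) with hf
  have hd : ∀ y : ℝ, 0 < y → HasDerivAt f ((y - 1) ^ 3 / (y ^ 2 * (y + 2) ^ 2)) y := by
    intro y hy
    have h1 : HasDerivAt (fun y : ℝ => (y - 1) * (5 * y + 1))
        (1 * (5 * y + 1) + (y - 1) * (5 * 1)) y :=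
      ((hasDerivAt_id y).sub_const 1).mul (((hasDerivAt_id y).const_mul 5).add_const 1)
    have h2 : HasDerivAt (fun y : ℝ => 2 * y * (y + 2))
        ((2 * 1) * (y + 2) + (2 * y) * 1) y :=
      ((hasDerivAt_id y).const_mul 2).mul ((hasDerivAt_id y).add_const 2)
    have h3 := (Real.hasDerivAt_log hy.ne').sub (h1.div h2 (by positivity))
    refine h3.congr_deriv ?_
    field_simp
    ring
  have h1 : f 1 = 0 := by simp [hf]
  have key : 0 ≤ f x := by
    rcases le_total x 1 with h | h
    · have : AntitoneOn f (Set.Icc x 1) := by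
        apply antitoneOn_of_deriv_nonpos (convex_Icc _ _)
        · intro y hy
          exact (hd y (by linarith [hy.1])).continuousAt.continuousWithinAt
        · intro y hy
          rw [interior_Icc] at hy
          exact (hd y (by linarith [hy.1])).differentiableAt.differentiableWithinAt
        · intro y hy
          rw [interior_Icc] at hy
          rw [(hd y (by linarith [hy.1])).deriv]
          apply div_nonpos_of_nonpos_of_nonneg _ (by positivity)
          have : 0 ≤ (1 - y) ^ 3 := pow_nonneg (by linarith [hy.2]) 3
          linarith [show (y - 1) ^ 3 = - (1 - y) ^ 3 by ring]
      have := this (Set.left_mem_Icc.2 h) (Set.right_mem_Icc.2 h) h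
      linarith
    · have : MonotoneOn f (Set.Icc 1 x) := by
        apply monotoneOn_of_deriv_nonneg (convex_Icc _ _)
        · intro y hy
          exact (hd y (by linarith [hy.1])).continuousAt.continuousWithinAt
        · intro y hy
          rw [interior_Icc] at hy
          exact (hd y (by linarith [hy.1])).differentiableAt.differentiableWithinAt
        · intro y hy
          rw [interior_Icc] at hy
          rw [(hd y (by linarith [hy.1])).deriv]
          exact div_nonneg (pow_nonneg (by linarith [hy.1]) 3) (by positivity)
      have := this (Set.left_mem_Icc.2 h) (Set.right_mem_Icc.2 h) h
      linarith
  simp only [hf] at key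
  linarith

lemma kl_pt {p q : ℝ} (hp : 0 ≤ p) (hq : 0 < q) :
    3 * ((p - q) ^ 2 / (2 * p + 4 * q)) ≤ p * Real.log (p / q) - p + q := by
  rcases hp.eq_or_lt with h | h
  · subst h
    simp only [zero_mul, mul_zero, zero_sub, zero_add, neg_sq, neg_zero]
    rw [show 3 * (q ^ 2 / (4 * q)) = 3 / 4 * q by field_simp]
    linarith
  · have := mul_le_mul_of_nonneg_left (log_lower (div_pos h hq)) hp
    have e : p * ((p / q - 1) * (5 * (p / q) + 1) / (2 * (p / q) * (p / q + 2))) =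
        3 * ((p - q) ^ 2 / (2 * p + 4 * q)) + p - q := by
      field_simp
      ring
    linarith

lemma pinsker [Fintype A] (p q : A → ℝ) (hp : ∀ a, 0 ≤ p a) (hq : ∀ a, 0 < q a)
    (hp1 : ∑ a, p a = 1) (hq1 : ∑ a, q a = 1) :
    (∑ a, |p a - q a|) ^ 2 ≤ 2 * dKL p q := by
  have h1 : (∑ a, |p a - q a|) ^ 2 ≤
      (∑ a, (p a - q a) ^ 2 / (2 * p a + 4 * q a)) * ∑ a, (2 * p a + 4 * q a) := by
    apply Finset.sum_sq_le_sum_mul_sum_of_sq_eq_mul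
    · intro a _
      have := hp a
      have := hq a
      positivity
    · intro a _
      have := hp a
      have := hq a
      positivity
    · intro a _
      have := hp a
      have := hq a
      rw [sq_abs]
      field_simp
  have h2 : ∑ a, (2 * p a + 4 * q a) = 6 := by
    rw [Finset.sum_add_distrib, ← Finset.mul_sum, ← Finset.mul_sum, hp1, hq1]; norm_num
  have h3 : 3 * ∑ a, (p a - q a) ^ 2 / (2 * p a + 4 * q a) ≤ dKL p q := by
    calc _ = ∑ a, 3 * ((p a - q a) ^ 2 / (2 * p a + 4 * q a)) := Finset.mul_sum _ _ _
      _ ≤ ∑ a, (p a * Real.log (p a / q a) - p a + q a) :=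
        Finset.sum_le_sum fun a _ => kl_pt (hp a) (hq a)
      _ = dKL p q := by
        rw [Finset.sum_add_distrib, Finset.sum_sub_distrib, hp1, hq1]
        simp [dKL]
  rw [h2] at h1
  linarith

lemma sd_nonneg [Fintype S] [Fintype A] (P : S → A → S → ℝ) (hP0 : ∀ s a s', 0 ≤ P s a s')
    (μ : S → ℝ) (hμ0 : ∀ s, 0 ≤ μ s) (π : S → A → ℝ) (hπ0 : ∀ s a, 0 ≤ π s a) (t : ℕ) :
    ∀ s, 0 ≤ stateDist P π μ t s := by
  induction t with
  | zero => exact hμ0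
  | succ t ih =>
    intro s
    exact Finset.sum_nonneg fun s' _ => Finset.sum_nonneg fun a _ =>
      mul_nonneg (mul_nonneg (hπ0 _ _) (hP0 _ _ _)) (ih _)

lemma sd_sum [Fintype S] [Fintype A] (P : S → A → S → ℝ)
    (hP1 : ∀ s a, ∑ s' : S, P s a s' = 1)
    (μ : S → ℝ) (hμ1 : ∑ s : S, μ s = 1) (π : S → A → ℝ)
    (hπ1 : ∀ s, ∑ a : A, π s a = 1) (t : ℕ) :
    ∑ s, stateDist P π μ t s = 1 := by
  induction t with
  | zero => exact hμ1
  | succ t ih =>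
    simp only [stateDist]
    rw [Finset.sum_comm]
    rw [← ih]
    refine Finset.sum_congr rfl fun s _ => ?_
    rw [Finset.sum_comm]
    simp_rw [← Finset.sum_mul, ← Finset.mul_sum, hP1, mul_one, hπ1, one_mul]

section
variable [Fintype S] [Fintype A] (P : S → A → S → ℝ) (hP0 : ∀ s a s', 0 ≤ P s a s')
    (hP1 : ∀ s a, ∑ s' : S, P s a s' = 1)
    (μ : S → ℝ) (hμ0 : ∀ s, 0 ≤ μ s) (hμ1 : ∑ s : S, μ s = 1)
    (γ : ℝ) (hγ0 : 0 ≤ γ) (hγ1 : γ < 1)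
    (π : S → A → ℝ) (hπ0 : ∀ s a, 0 ≤ π s a) (hπ1 : ∀ s, ∑ a : A, π s a = 1)

lemma geo_summable (γ : ℝ) (hγ0 : 0 ≤ γ) (hγ1 : γ < 1) (f : ℕ → ℝ) (C : ℝ)
    (hf : ∀ t, |f t| ≤ C) : Summable fun t => γ ^ t * f t := by
  refine Summable.of_norm_bounded (g := fun t => γ ^ t * C)
    ((summable_geometric_of_lt_one hγ0 hγ1).mul_right C) fun t => ?_
  rw [Real.norm_eq_abs, abs_mul, abs_of_nonneg (pow_nonneg hγ0 t)]
  exact mul_le_mul_of_nonneg_left (hf t) (pow_nonneg hγ0 t)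

lemma geo_bound (γ : ℝ) (hγ0 : 0 ≤ γ) (hγ1 : γ < 1) (f : ℕ → ℝ) (C : ℝ)
    (hf : ∀ t, |f t| ≤ C) : |∑' t, γ ^ t * f t| ≤ C / (1 - γ) := by
  have h := tsum_of_norm_bounded (f := fun t => γ ^ t * f t)
    ((hasSum_geometric_of_lt_one hγ0 hγ1).mul_right C) fun t => by
      rw [Real.norm_eq_abs, abs_mul, abs_of_nonneg (pow_nonneg hγ0 t)]
      exact mul_le_mul_of_nonneg_left (hf t) (pow_nonneg hγ0 t)
  rw [Real.norm_eq_abs] at h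
  rwa [div_eq_inv_mul]

lemma avg_bound {X : Type*} [Fintype X] (w f : X → ℝ) (C : ℝ) (hw : ∀ x, 0 ≤ w x)
    (hw1 : ∑ x, w x = 1) (hf : ∀ x, |f x| ≤ C) : |∑ x, w x * f x| ≤ C := by
  calc |∑ x, w x * f x| ≤ ∑ x, |w x * f x| := Finset.abs_sum_le_sum_abs _ _
    _ ≤ ∑ x, w x * C := Finset.sum_le_sum fun x _ => by
        rw [abs_mul, abs_of_nonneg (hw x)]
        exact mul_le_mul_of_nonneg_left (hf x) (hw x)
    _ = C := by rw [← Finset.sum_mul, hw1, one_mul]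

include hP0 hP1 hμ0 hμ1 hγ0 hγ1 hπ0 hπ1

lemma sd_summable (s : S) : Summable fun t => γ ^ t * stateDist P π μ t s := by
  refine geo_summable γ hγ0 hγ1 _ 1 fun t => ?_
  rw [abs_of_nonneg (sd_nonneg P hP0 μ hμ0 π hπ0 t s), ← sd_sum P hP1 μ hμ1 π hπ1 t]
  exact Finset.single_le_sum (fun s _ => sd_nonneg P hP0 μ hμ0 π hπ0 t s) (Finset.mem_univ s)

lemma sd_tsum (f : S → ℝ) : ∑ s, f s * visitation P π μ γ s =
    (1 - γ) * ∑' t, γ ^ t * ∑ s, f s * stateDist P π μ t s := by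
  have hs := sd_summable P hP0 hP1 μ hμ0 hμ1 γ hγ0 hγ1 π hπ0 hπ1
  have : ∀ t, γ ^ t * ∑ s, f s * stateDist P π μ t s
      = ∑ s, f s * (γ ^ t * stateDist P π μ t s) := fun t => by
    rw [Finset.mul_sum]; exact Finset.sum_congr rfl fun s _ => by ring
  simp_rw [this]
  rw [Summable.tsum_finsetSum fun s _ => (hs s).mul_left (f s)]
  rw [Finset.mul_sum]
  refine Finset.sum_congr rfl fun s _ => ?_
  rw [tsum_mul_left, visitation]; ring

lemma vis_nonneg (s : S) : 0 ≤ visitation P π μ γ s :=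
  mul_nonneg (by linarith) (tsum_nonneg fun t =>
    mul_nonneg (pow_nonneg hγ0 t) (sd_nonneg P hP0 μ hμ0 π hπ0 t s))

lemma vis_sum : ∑ s, visitation P π μ γ s = 1 := by
  have h := sd_tsum P hP0 hP1 μ hμ0 hμ1 γ hγ0 hγ1 π hπ0 hπ1 (fun _ => 1)
  simp only [one_mul, sd_sum P hP1 μ hμ1 π hπ1, mul_one] at h
  rw [h, tsum_geometric_of_lt_one hγ0 hγ1]
  exact mul_inv_cancel₀ (by linarith)

lemma flow (s' : S) : visitation P π μ γ s' =
    (1 - γ) * μ s' + γ * ∑ s, (∑ a, π s a * P s a s') * visitation P π μ γ s := by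
  rw [sd_tsum P hP0 hP1 μ hμ0 hμ1 γ hγ0 hγ1 π hπ0 hπ1 (fun s => ∑ a, π s a * P s a s')]
  rw [visitation, (sd_summable P hP0 hP1 μ hμ0 hμ1 γ hγ0 hγ1 π hπ0 hπ1 s').tsum_eq_zero_add]
  have : ∀ t, γ ^ (t + 1) * stateDist P π μ (t + 1) s' =
      γ * (γ ^ t * ∑ s, (∑ a, π s a * P s a s') * stateDist P π μ t s) := fun t => by
    simp only [stateDist, Finset.sum_mul]
    ring
  simp_rw [this, tsum_mul_left]
  simp only [stateDist]
  ring

lemma perf_id (R : S → A → ℝ) (V : S → ℝ) :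
    (1 - γ) * (perf P R π μ γ - ∑ s, μ s * V s) =
    ∑ s, visitation P π μ γ s *
      ((∑ a, π s a * (R s a + γ * ∑ s', P s a s' * V s')) - V s) := by
  have h1 : (1 - γ) * perf P R π μ γ = ∑ s, visitation P π μ γ s * ∑ a, π s a * R s a := by
    have h := sd_tsum P hP0 hP1 μ hμ0 hμ1 γ hγ0 hγ1 π hπ0 hπ1 (fun s => ∑ a, π s a * R s a)
    simp_rw [mul_comm (visitation _ _ _ _ _)]
    rw [h, perf]
    simp_rw [Finset.sum_mul, mul_comm (R _ _)]
  have h2 : ∑ s, visitation P π μ γ s * V s = (1 - γ) * ∑ s, μ s * V s +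
      γ * ∑ s, visitation P π μ γ s * ∑ a, π s a * ∑ s', P s a s' * V s' := by
    have e : ∀ s', visitation P π μ γ s' * V s' = (1 - γ) * (μ s' * V s') +
      γ * ∑ s, visitation P π μ γ s * ((∑ a, π s a * P s a s') * V s') := fun s' => by
      conv_lhs => rw [flow P hP0 hP1 μ hμ0 hμ1 γ hγ0 hγ1 π hπ0 hπ1 s']
      rw [add_mul, mul_assoc, mul_assoc, Finset.sum_mul]
      congr 2
      exact Finset.sum_congr rfl fun s _ => by ring
    rw [Finset.sum_congr rfl fun s' _ => e s', Finset.sum_add_distrib, ← Finset.mul_sum,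
      ← Finset.mul_sum, Finset.sum_comm]
    congr 2
    refine Finset.sum_congr rfl fun s _ => ?_
    rw [← Finset.mul_sum]
    congr 1
    simp_rw [Finset.sum_mul, Finset.mul_sum]
    rw [Finset.sum_comm]
    simp_rw [mul_assoc]
  have e : ∀ s, visitation P π μ γ s *
      ((∑ a, π s a * (R s a + γ * ∑ s', P s a s' * V s')) - V s) =
      visitation P π μ γ s * (∑ a, π s a * R s a) +
      γ * (visitation P π μ γ s * ∑ a, π s a * ∑ s', P s a s' * V s')
      - visitation P π μ γ s * V s := fun s => by
    have : ∑ a, π s a * (R s a + γ * ∑ s', P s a s' * V s') =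
        ∑ a, π s a * R s a + γ * ∑ a, π s a * ∑ s', P s a s' * V s' := by
      rw [Finset.mul_sum, ← Finset.sum_add_distrib]
      exact Finset.sum_congr rfl fun a _ => by ring
    rw [this]; ring
  rw [Finset.sum_congr rfl fun s _ => e s, Finset.sum_sub_distrib, Finset.sum_add_distrib,
    ← Finset.mul_sum, ← h1, h2]
  ring

omit hμ0 hμ1 in
lemma exists_value (R : S → A → ℝ) (Rmax : ℝ) (hR : ∀ s a, |R s a| ≤ Rmax) :
    ∃ V : S → ℝ, (∀ s, |V s| ≤ Rmax / (1 - γ)) ∧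
      ∀ s, V s = ∑ a, π s a * (R s a + γ * ∑ s', P s a s' * V s') := by
  let r : ℕ → S → ℝ := fun t => Nat.rec (fun s => ∑ a, π s a * R s a)
    (fun _ f s => ∑ a, π s a * ∑ s', P s a s' * f s') t
  have r0 : ∀ s, r 0 s = ∑ a, π s a * R s a := fun s => rfl
  have r1 : ∀ t s, r (t + 1) s = ∑ a, π s a * ∑ s', P s a s' * r t s' := fun t s => rfl
  have hb : ∀ t s, |r t s| ≤ Rmax := by
    intro t
    induction t with
    | zero => exact fun s => avg_bound _ _ _ (hπ0 s) (hπ1 s) (hR s)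
    | succ t ih =>
      intro s
      rw [r1]
      exact avg_bound _ _ _ (hπ0 s) (hπ1 s) fun a => avg_bound _ _ _ (hP0 s a) (hP1 s a) ih
  have hs : ∀ s, Summable fun t => γ ^ t * r t s := fun s =>
    geo_summable γ hγ0 hγ1 _ Rmax fun t => hb t s
  refine ⟨fun s => ∑' t, γ ^ t * r t s, fun s => geo_bound γ hγ0 hγ1 _ _ fun t => hb t s,
    fun s => ?_⟩
  have e : ∀ a, ∑ s', P s a s' * ∑' t, γ ^ t * r t s' =
      ∑' t, ∑ s', P s a s' * (γ ^ t * r t s') := fun a => by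
    rw [Summable.tsum_finsetSum fun s' _ => (hs s').mul_left _]
    simp_rw [tsum_mul_left]
  have hs2 : ∀ a, Summable fun t => ∑ s', P s a s' * (γ ^ t * r t s') := fun a =>
    summable_sum fun s' _ => (hs s').mul_left _
  have e2 : ∑' t, γ ^ (t + 1) * r (t + 1) s =
      γ * ∑ a, π s a * ∑ s', P s a s' * ∑' t, γ ^ t * r t s' := by
    simp_rw [e, ← tsum_mul_left]
    rw [← Summable.tsum_finsetSum fun a _ => (hs2 a).mul_left _, ← tsum_mul_left]
    refine tsum_congr fun t => ?_
    rw [r1, pow_succ', mul_assoc, Finset.mul_sum]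
    congr 1
    refine Finset.sum_congr rfl fun a _ => ?_
    rw [mul_left_comm, Finset.mul_sum]
    congr 1
    exact Finset.sum_congr rfl fun s' _ => by ring
  show ∑' t, γ ^ t * r t s = _
  rw [(hs s).tsum_eq_zero_add, e2, r0, pow_zero, one_mul, Finset.mul_sum,
    ← Finset.sum_add_distrib]
  exact Finset.sum_congr rfl fun a _ => by ring

end

lemma marg_sum [Fintype S] [Fintype Z] [DecidableEq Z] (φ : S → Z) (f : S → ℝ) (g : Z → ℝ) :
    ∑ z, (∑ s, if φ s = z then f s else 0) * g z = ∑ s, f s * g (φ s) := by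
  simp_rw [Finset.sum_mul]
  rw [Finset.sum_comm]
  refine Finset.sum_congr rfl fun s _ => ?_
  simp [ite_mul]

lemma marg_nonneg [Fintype S] [DecidableEq Z] (φ : S → Z) (f : S → ℝ) (hf : ∀ s, 0 ≤ f s)
    (z : Z) : 0 ≤ ∑ s, if φ s = z then f s else 0 :=
  Finset.sum_nonneg fun s _ => by split_ifs <;> simp [hf]

lemma marg_mul [Fintype S] [DecidableEq Z] (φ : S → Z) (ρ : S → ℝ) (hρ : ∀ s, 0 ≤ ρ s)
    (π : S → A → ℝ) (z : Z) (a : A) : margDist φ ρ z * margPolicy φ ρ π z a =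
    ∑ s, if φ s = z then ρ s * π s a else 0 := by
  rcases eq_or_ne (margDist φ ρ z) 0 with h | h
  · rw [h, zero_mul, eq_comm]
    have h' := (Finset.sum_eq_zero_iff_of_nonneg (fun s _ => by
      split_ifs <;> simp [hρ])).1 h
    refine Finset.sum_eq_zero fun s hs => ?_
    have := h' s hs
    split_ifs at this ⊢ <;> simp_all
  · rw [margPolicy, mul_div_cancel₀ _ h]

lemma marg_term [Fintype S] [Fintype A] [DecidableEq Z] (φ : S → Z) (ρ : S → ℝ)
    (hρ : ∀ s, 0 ≤ ρ s) (π : S → A → ℝ) (hπ0 : ∀ s a, 0 ≤ π s a) (hπ1 : ∀ s, ∑ a, π s a = 1)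
    (q : A → ℝ) (hq : ∀ a, 0 < q a) (hq1 : ∑ a, q a = 1) (z : Z) :
    margDist φ ρ z * (∑ a, |margPolicy φ ρ π z a - q a|) ^ 2 ≤
    2 * (margDist φ ρ z * dKL (margPolicy φ ρ π z) q) := by
  have h0 : 0 ≤ margDist φ ρ z := marg_nonneg φ ρ hρ z
  rcases h0.eq_or_lt with h | h
  · rw [← h]; simp
  · rw [mul_left_comm]
    refine mul_le_mul_of_nonneg_left (pinsker _ _ (fun a => ?_) hq ?_ hq1) h0
    · exact div_nonneg (marg_nonneg φ _ (fun s => mul_nonneg (hρ s) (hπ0 s a)) z) h0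
    · apply mul_left_cancel₀ h.ne'
      rw [Finset.mul_sum, mul_one]
      simp_rw [marg_mul φ ρ hρ]
      rw [Finset.sum_comm, margDist]
      refine Finset.sum_congr rfl fun s _ => ?_
      split_ifs
      · rw [← Finset.mul_sum, hπ1, mul_one]
      · simp

lemma latent_bound [Fintype S] [Fintype A] [Fintype Z] [DecidableEq Z] (φ : S → Z) (ρ : S → ℝ)
    (hρ : ∀ s, 0 ≤ ρ s) (hρ1 : ∑ s, ρ s = 1)
    (π : S → A → ℝ) (hπ0 : ∀ s a, 0 ≤ π s a) (hπ1 : ∀ s, ∑ a, π s a = 1)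
    (q : Z → A → ℝ) (hq : ∀ z a, 0 < q z a) (hq1 : ∀ z, ∑ a, q z a = 1)
    (Q : Z → A → ℝ) (C : ℝ) (hC : 0 ≤ C) (hQ : ∀ z a, |Q z a| ≤ C) :
    |∑ s, ρ s * ∑ a, (π s a - q (φ s) a) * Q (φ s) a| ≤
    2 * C * Real.sqrt ((1 / 2) * ∑ z, margDist φ ρ z * dKL (margPolicy φ ρ π z) (q z)) := by
  have h0 : ∀ z, 0 ≤ margDist φ ρ z := marg_nonneg φ ρ hρ
  have e : ∑ s, ρ s * ∑ a, (π s a - q (φ s) a) * Q (φ s) a =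
      ∑ z, margDist φ ρ z * ∑ a, (margPolicy φ ρ π z a - q z a) * Q z a := by
    have h1 : ∀ z, margDist φ ρ z * ∑ a, (margPolicy φ ρ π z a - q z a) * Q z a =
        ∑ a, (∑ s, if φ s = z then ρ s * π s a else 0) * Q z a
          - margDist φ ρ z * ∑ a, q z a * Q z a := fun z => by
      simp_rw [← marg_mul φ ρ hρ, Finset.mul_sum, ← Finset.sum_sub_distrib]
      exact Finset.sum_congr rfl fun a _ => by ring
    simp_rw [h1]
    rw [Finset.sum_sub_distrib, Finset.sum_comm]
    simp_rw [margDist]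
    rw [marg_sum φ ρ (fun z => ∑ a, q z a * Q z a)]
    rw [Finset.sum_congr rfl fun a _ => marg_sum φ (fun s => ρ s * π s a) (fun z => Q z a)]
    rw [Finset.sum_comm, ← Finset.sum_sub_distrib]
    refine Finset.sum_congr rfl fun s _ => ?_
    simp_rw [Finset.mul_sum, ← Finset.sum_sub_distrib]
    exact Finset.sum_congr rfl fun a _ => by ring
  set T : Z → ℝ := fun z => ∑ a, |margPolicy φ ρ π z a - q z a| with hT
  have b1 : |∑ z, margDist φ ρ z * ∑ a, (margPolicy φ ρ π z a - q z a) * Q z a| ≤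
      C * ∑ z, margDist φ ρ z * T z := by
    rw [Finset.mul_sum]
    refine (Finset.abs_sum_le_sum_abs _ _).trans (Finset.sum_le_sum fun z _ => ?_)
    rw [abs_mul, abs_of_nonneg (h0 z), mul_left_comm]
    refine mul_le_mul_of_nonneg_left ?_ (h0 z)
    rw [hT, Finset.mul_sum]
    refine (Finset.abs_sum_le_sum_abs _ _).trans (Finset.sum_le_sum fun a _ => ?_)
    rw [abs_mul, mul_comm]
    exact mul_le_mul_of_nonneg_right (hQ z a) (abs_nonneg _)
  have m1 : ∑ z, margDist φ ρ z = 1 := by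
    have := marg_sum φ ρ (fun _ => 1)
    simp only [mul_one] at this
    rw [← hρ1, ← this]; rfl
  have b2 : (∑ z, margDist φ ρ z * T z) ^ 2 ≤
      (∑ z, margDist φ ρ z) * ∑ z, margDist φ ρ z * T z ^ 2 :=
    Finset.sum_sq_le_sum_mul_sum_of_sq_eq_mul _ (fun z _ => h0 z)
      (fun z _ => mul_nonneg (h0 z) (sq_nonneg _)) (fun z _ => by ring)
  have b3 : ∑ z, margDist φ ρ z * T z ^ 2 ≤
      2 * ∑ z, margDist φ ρ z * dKL (margPolicy φ ρ π z) (q z) := by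
    rw [Finset.mul_sum]
    exact Finset.sum_le_sum fun z _ => marg_term φ ρ hρ π hπ0 hπ1 (q z) (hq z) (hq1 z) z
  have b4 : (∑ z, margDist φ ρ z * T z) / 2 ≤
      Real.sqrt ((1 / 2) * ∑ z, margDist φ ρ z * dKL (margPolicy φ ρ π z) (q z)) := by
    apply Real.le_sqrt_of_sq_le
    rw [m1, one_mul] at b2
    nlinarith
  rw [e]
  calc _ ≤ _ := b1
    _ = 2 * C * ((∑ z, margDist φ ρ z * T z) / 2) := by ring
    _ ≤ _ := mul_le_mul_of_nonneg_left b4 (by linarith)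

theorem on_policy_latent_imitation_bound
    [Fintype S] [Fintype A] [Fintype Z] [Nonempty S] [Nonempty A] [DecidableEq Z]
    (P : S → A → S → ℝ) (hP0 : ∀ s a s', 0 ≤ P s a s')
    (hP1 : ∀ s a, ∑ s' : S, P s a s' = 1)
    (R : S → A → ℝ) (Rmax : ℝ) (hRmax : 0 ≤ Rmax) (hR : ∀ s a, |R s a| ≤ Rmax)
    (μ : S → ℝ) (hμ0 : ∀ s, 0 ≤ μ s) (hμ1 : ∑ s : S, μ s = 1)
    (γ : ℝ) (hγ0 : 0 ≤ γ) (hγ1 : γ < 1)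
    (πstar : S → A → ℝ)
    (hπs0 : ∀ s a, 0 ≤ πstar s a) (hπs1 : ∀ s, ∑ a : A, πstar s a = 1)
    (φ : S → Z)
    (RZ : Z → A → ℝ) (hRZ : ∀ z a, |RZ z a| ≤ Rmax)
    (PZ : Z → A → S → ℝ) (hPZ0 : ∀ z a s', 0 ≤ PZ z a s')
    (hPZ1 : ∀ z a, ∑ s' : S, PZ z a s' = 1)
    (πZ : Z → A → ℝ) (hπZ0 : ∀ z a, 0 < πZ z a) (hπZ1 : ∀ z, ∑ a : A, πZ z a = 1) :
    perfDiff P R μ γ (fun s => πZ (φ s)) πstar ≤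
      ((1 / (1 - γ)) * ∑ s : S, visitation P πstar μ γ s * ∑ a : A, |R s a - RZ (φ s) a|
          + (2 * γ * Rmax / (1 - γ) ^ 2) *
              ∑ s : S, visitation P πstar μ γ s * ∑ a : A, dTV (P s a) (PZ (φ s) a))
        + (2 * Rmax / (1 - γ) ^ 2) *
            Real.sqrt ((1 / 2) * ∑ z : Z, margDist φ (visitation P πstar μ γ) z *
              dKL (margPolicy φ (visitation P πstar μ γ) πstar z) (πZ z)) := by
  have hg : 0 < 1 - γ := by linarith
  have hπ0 : ∀ s a, 0 ≤ (fun s => πZ (φ s)) s a := fun s a => (hπZ0 _ _).le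
  have hπ1 : ∀ s, ∑ a, (fun s => πZ (φ s)) s a = 1 := fun s => hπZ1 _
  obtain ⟨V, hV, hB⟩ := exists_value P hP0 hP1 γ hγ0 hγ1 (fun s => πZ (φ s)) hπ0 hπ1 R Rmax hR
  have p1 := perf_id P hP0 hP1 μ hμ0 hμ1 γ hγ0 hγ1 (fun s => πZ (φ s)) hπ0 hπ1 R V
  have p2 := perf_id P hP0 hP1 μ hμ0 hμ1 γ hγ0 hγ1 πstar hπs0 hπs1 R V
  have d0 := vis_nonneg P hP0 hP1 μ hμ0 hμ1 γ hγ0 hγ1 πstar hπs0 hπs1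
  have d1 := vis_sum P hP0 hP1 μ hμ0 hμ1 γ hγ0 hγ1 πstar hπs0 hπs1
  have p1 := p1.trans (Finset.sum_eq_zero (fun s _ => by rw [← hB s, sub_self, mul_zero]))
  set d := visitation P πstar μ γ with hd
  set QZ : Z → A → ℝ := fun z a => RZ z a + γ * ∑ s', PZ z a s' * V s' with hQZ
  set C := Rmax / (1 - γ) with hC
  have hC0 : 0 ≤ C := div_nonneg hRmax hg.le
  have hQb : ∀ z a, |QZ z a| ≤ C := fun z a => by
    have h1 := avg_bound _ _ _ (hPZ0 z a) (hPZ1 z a) hV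
    calc |QZ z a| ≤ |RZ z a| + |γ * ∑ s', PZ z a s' * V s'| := abs_add_le _ _
      _ ≤ Rmax + γ * C := by
        rw [abs_mul, abs_of_nonneg hγ0]
        exact add_le_add (hRZ z a) (mul_le_mul_of_nonneg_left h1 hγ0)
      _ = C := by rw [hC]; field_simp; ring
  have hL := latent_bound φ d d0 d1 πstar hπs0 hπs1 πZ hπZ0 hπZ1 QZ C hC0 hQb
  set K := Real.sqrt ((1 / 2) * ∑ z, margDist φ d z * dKL (margPolicy φ d πstar z) (πZ z))
  have hle : ∀ s a, |πstar s a - πZ (φ s) a| ≤ 1 := fun s a => by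
    have h1 : πstar s a ≤ 1 := hπs1 s ▸
      Finset.single_le_sum (fun a _ => hπs0 s a) (Finset.mem_univ a)
    have h2 : πZ (φ s) a ≤ 1 := hπZ1 (φ s) ▸
      Finset.single_le_sum (fun a _ => (hπZ0 (φ s) a).le) (Finset.mem_univ a)
    rw [abs_le]
    constructor <;> linarith [hπs0 s a, hπZ0 (φ s) a]
  have hE : ∀ s a, |(R s a + γ * ∑ s', P s a s' * V s') - QZ (φ s) a| ≤
      |R s a - RZ (φ s) a| + 2 * γ * C * dTV (P s a) (PZ (φ s) a) := fun s a => by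
    have e : (R s a + γ * ∑ s', P s a s' * V s') - QZ (φ s) a = (R s a - RZ (φ s) a) +
        γ * ∑ s', (P s a s' - PZ (φ s) a s') * V s' := by
      simp only [hQZ, sub_mul, Finset.sum_sub_distrib]; ring
    have h1 : |∑ s', (P s a s' - PZ (φ s) a s') * V s'| ≤ 2 * C * dTV (P s a) (PZ (φ s) a) := by
      rw [dTV, show ∀ x : ℝ, 2 * C * (1 / 2 * x) = C * x by intro x; ring, Finset.mul_sum]
      refine (Finset.abs_sum_le_sum_abs _ _).trans (Finset.sum_le_sum fun s' _ => ?_)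
      rw [abs_mul, mul_comm]
      exact mul_le_mul_of_nonneg_right (hV s') (abs_nonneg _)
    rw [e]
    refine (abs_add_le _ _).trans (add_le_add le_rfl ?_)
    rw [abs_mul, abs_of_nonneg hγ0]
    calc _ ≤ _ := mul_le_mul_of_nonneg_left h1 hγ0
      _ = _ := by ring
  have hsplit : ∑ s, d s * ((∑ a, πstar s a * (R s a + γ * ∑ s', P s a s' * V s')) - V s) =
      ∑ s, d s * ∑ a, (πstar s a - πZ (φ s) a) *
        ((R s a + γ * ∑ s', P s a s' * V s') - QZ (φ s) a) +
      ∑ s, d s * ∑ a, (πstar s a - πZ (φ s) a) * QZ (φ s) a := by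
    rw [← Finset.sum_add_distrib]
    refine Finset.sum_congr rfl fun s _ => ?_
    rw [← mul_add, ← Finset.sum_add_distrib]
    congr 1
    conv_lhs => rw [hB s]
    rw [← Finset.sum_sub_distrib]
    exact Finset.sum_congr rfl fun a _ => by ring
  have hM : |∑ s, d s * ∑ a, (πstar s a - πZ (φ s) a) *
        ((R s a + γ * ∑ s', P s a s' * V s') - QZ (φ s) a)| ≤
      ∑ s, d s * ∑ a, |R s a - RZ (φ s) a| +
        2 * γ * C * ∑ s, d s * ∑ a, dTV (P s a) (PZ (φ s) a) := by
    rw [Finset.mul_sum, ← Finset.sum_add_distrib]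
    refine (Finset.abs_sum_le_sum_abs _ _).trans (Finset.sum_le_sum fun s _ => ?_)
    rw [abs_mul, abs_of_nonneg (d0 s), mul_left_comm, ← mul_add]
    refine mul_le_mul_of_nonneg_left ?_ (d0 s)
    rw [Finset.mul_sum, ← Finset.sum_add_distrib]
    refine (Finset.abs_sum_le_sum_abs _ _).trans (Finset.sum_le_sum fun a _ => ?_)
    rw [abs_mul]
    exact (mul_le_of_le_one_left (abs_nonneg _) (hle s a)).trans (hE s a)
  rw [hsplit] at p2
  have hfin : (1 - γ) * perfDiff P R μ γ (fun s => πZ (φ s)) πstar ≤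
      (∑ s, d s * ∑ a, |R s a - RZ (φ s) a| +
        2 * γ * C * ∑ s, d s * ∑ a, dTV (P s a) (PZ (φ s) a)) + 2 * C * K := by
    rw [perfDiff, abs_sub_comm]
    nth_rewrite 1 [← abs_of_pos hg]
    rw [← abs_mul]
    have : (1 - γ) * (perf P R πstar μ γ - perf P R (fun s => πZ (φ s)) μ γ) =
      (1 - γ) * (perf P R πstar μ γ - ∑ s, μ s * V s) -
      (1 - γ) * (perf P R (fun s => πZ (φ s)) μ γ - ∑ s, μ s * V s) := by ring
    rw [this, p1, p2, sub_zero]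
    exact (abs_add_le _ _).trans (add_le_add hM hL)
  rw [mul_comm, ← le_div_iff₀ hg] at hfin
  refine hfin.trans (le_of_eq ?_)
  rw [hC]
  field_simp
end
end

section
/- Off-policy representation bound, total-variation form: Under the same setup as the off-policy representation bound (finite MDP, target policy π*, offline distribution d^off with d^off(s) > 0 whenever d^{π*}(s) > 0, finite Z, φ : S → Z, R_Z : Z×A → [−R_max,R_max], P_Z(·|z,a) probability distributions with P_Z(s'|φ(s),a) > 0 whenever P(s'|s,a) > 0 and d^off(s) > 0, and ε = (|A|/(1−γ)) J_R + (2γ|A| R_max/(1−γ)²) J_T with J_R = √(∑_s d^off(s)(1/|A|)∑_a (R(s,a)−R_Z(φ(s),a))²) and J_T = √((1/2)∑_s d^off(s)(1/|A|)∑_a D_KL(P(·|s,a)‖P_Z(·|φ(s),a)))), for every latent policy π_Z assigning to each z∈Z a probability distribution π_Z(·|z) on A it holds that PerfDiff(π_Z∘φ, π*) ≤ (1 + D_χ²(d^{π*}‖d^off)^{1/2}) · ε + (2R_max/(1−γ)²) · ∑_{z∈Z} d^{π*}_Z(z) D_TV(π_{*,Z}(·|z) ‖ π_Z(·|z)). 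-/
open Finset

noncomputable section

variable {S A Z : Type*}

lemma aux_log (t : ℝ) (ht : 0 < t) :
    (t - 1) ^ 2 ≤ (2 / 3) * (t + 2) * (t * Real.log t - t + 1) := by
  -- g t = log t - (t-1)(5t+1)/(2t(t+2))
  let g : ℝ → ℝ := fun t => Real.log t - (t - 1) * (5 * t + 1) / (2 * t * (t + 2))
  have hd : ∀ x : ℝ, 0 < x → HasDerivAt g ((x - 1) ^ 3 / (x ^ 2 * (x + 2) ^ 2)) x := by
    intro x hx
    have h1 := Real.hasDerivAt_log hx.ne'
    have hn : HasDerivAt (fun t : ℝ => (t - 1) * (5 * t + 1))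
        (1 * (5 * x + 1) + (x - 1) * (5 * 1)) x :=
      ((hasDerivAt_id x).sub_const 1).mul (((hasDerivAt_id x).const_mul 5).add_const 1)
    have hdn : HasDerivAt (fun t : ℝ => 2 * t * (t + 2))
        (2 * 1 * (x + 2) + 2 * x * 1) x :=
      ((hasDerivAt_id x).const_mul 2).mul ((hasDerivAt_id x).add_const 2)
    have h2 := h1.sub (hn.div hdn (by positivity))
    refine h2.congr_deriv ?_
    have : x + 2 ≠ 0 := by positivity
    have := hx.ne'
    field_simp
    ring
  have hg1 : g 1 = 0 := by simp [g]
  have hg : 0 ≤ g t := by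
    rcases le_total t 1 with h | h
    · have := antitoneOn_of_deriv_nonpos (D := Set.Ioc (0 : ℝ) 1) (f := g) (convex_Ioc 0 1)
        (fun x hx => (hd x hx.1).continuousAt.continuousWithinAt)
        (fun x hx => by
          rw [interior_Ioc] at hx
          exact (hd x hx.1).differentiableAt.differentiableWithinAt)
        (fun x hx => by
          rw [interior_Ioc] at hx
          rw [(hd x hx.1).deriv]
          apply div_nonpos_of_nonpos_of_nonneg
          · have : x - 1 ≤ 0 := by linarith [hx.2]
            exact Odd.pow_nonpos (by decide) this
          · positivity)
      have := this ⟨ht, h⟩ ⟨one_pos, le_rfl⟩ h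
      linarith
    · have := monotoneOn_of_deriv_nonneg (D := Set.Ici (1 : ℝ)) (f := g) (convex_Ici 1)
        (fun x hx => (hd x (lt_of_lt_of_le one_pos hx)).continuousAt.continuousWithinAt)
        (fun x hx => by
          rw [interior_Ici] at hx
          exact (hd x (lt_trans one_pos hx)).differentiableAt.differentiableWithinAt)
        (fun x hx => by
          rw [interior_Ici] at hx
          rw [(hd x (lt_trans one_pos hx)).deriv]
          have : 0 ≤ x - 1 := by linarith [Set.mem_Ioi.1 hx]
          positivity)
      have := this (Set.mem_Ici.2 le_rfl) (Set.mem_Ici.2 h) h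
      linarith
  have h3 : 0 ≤ (2 / 3) * (t + 2) * t * g t := by positivity
  have h4 : (2 / 3) * (t + 2) * t * g t
      = (2 / 3) * (t + 2) * (t * Real.log t - t + 1) - (t - 1) ^ 2 := by
    simp only [g]
    have : t + 2 ≠ 0 := by positivity
    field_simp
    ring
  linarith

lemma aux_pt (p q : ℝ) (hp : 0 ≤ p) (hq : 0 ≤ q) (h : 0 < p → 0 < q) :
    (p - q) ^ 2 ≤ ((2 / 3) * (p + 2 * q)) * (p * Real.log (p / q) - p + q) ∧
      0 ≤ p * Real.log (p / q) - p + q := by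
  rcases hp.eq_or_lt with rfl | hp
  · simp; exact ⟨by nlinarith, hq⟩
  have hq' := h hp
  have := aux_log (p / q) (by positivity)
  have h2 : (p - q) ^ 2 ≤ ((2 / 3) * (p + 2 * q)) * (p * Real.log (p / q) - p + q) := by
    have h3 := mul_le_mul_of_nonneg_left this (sq_nonneg q)
    have e1 : q ^ 2 * (p / q - 1) ^ 2 = (p - q) ^ 2 := by field_simp
    have e2 : q ^ 2 * (2 / 3 * (p / q + 2) * (p / q * Real.log (p / q) - p / q + 1))
      = ((2 / 3) * (p + 2 * q)) * (p * Real.log (p / q) - p + q) := by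
      generalize Real.log (p / q) = l
      field_simp
    linarith
  refine ⟨h2, ?_⟩
  by_contra hc
  push Not at hc
  have : ((2 / 3) * (p + 2 * q)) * (p * Real.log (p / q) - p + q) < 0 :=
    mul_neg_of_pos_of_neg (by positivity) hc
  nlinarith [sq_nonneg (p - q)]

lemma aux_pinsker {X : Type*} [Fintype X] (p q : X → ℝ) (hp : ∀ x, 0 ≤ p x) (hq : ∀ x, 0 ≤ q x)
    (hp1 : ∑ x, p x = 1) (hq1 : ∑ x, q x = 1) (h : ∀ x, 0 < p x → 0 < q x) :
    (∑ x, |p x - q x|) ^ 2 ≤ 2 * dKL p q := by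
  have h1 := sum_sq_le_sum_mul_sum_of_sq_le_mul (s := (univ : Finset X))
    (r := fun x => |p x - q x|) (f := fun x => (2 / 3) * (p x + 2 * q x))
    (g := fun x => p x * Real.log (p x / q x) - p x + q x)
    (fun x _ => by have := hp x; have := hq x; positivity)
    (fun x _ => (aux_pt _ _ (hp x) (hq x) (h x)).2)
    (fun x _ => by rw [sq_abs]; exact (aux_pt _ _ (hp x) (hq x) (h x)).1)
  have e1 : ∑ x, (2 / 3) * (p x + 2 * q x) = 2 := by
    rw [← mul_sum, sum_add_distrib, ← mul_sum, hp1, hq1]; norm_num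
  have e2 : ∑ x, (p x * Real.log (p x / q x) - p x + q x) = dKL p q := by
    rw [sum_add_distrib, sum_sub_distrib, hp1, hq1]; simp [dKL]
  rw [e1, e2] at h1
  exact h1

lemma aux_com {S A : Type*} [Fintype S] [Fintype A] [Nonempty A] (d doff : S → ℝ)
    (hd : ∀ s, 0 ≤ d s)
    (ho : ∀ s, 0 ≤ doff s) (ho1 : ∑ s, doff s = 1) (hs : ∀ s, 0 < d s → 0 < doff s)
    (x y : S → A → ℝ) (hx : ∀ s a, 0 ≤ x s a) (hxy : ∀ s a, 0 < doff s → x s a ^ 2 ≤ y s a) :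
    ∑ s, d s * ∑ a, x s a ≤ (1 + Real.sqrt (dChi2 d doff)) * ((Fintype.card A : ℝ) *
      Real.sqrt (∑ s, doff s * ((1 / (Fintype.card A : ℝ)) * ∑ a, y s a))) := by
  set n : ℝ := (Fintype.card A : ℝ) with hn
  have hn0 : 0 < n := by rw [hn]; exact_mod_cast Fintype.card_pos
  set g : S → ℝ := fun s => (1 / n) * ∑ a, x s a with hg
  have hg0 : ∀ s, 0 ≤ g s := fun s => mul_nonneg (by positivity) (sum_nonneg fun a _ => hx s a)
  set E := ∑ s, doff s * ((1 / n) * ∑ a, y s a) with hE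
  have hgE : ∑ s, doff s * g s ^ 2 ≤ E := by
    apply sum_le_sum
    intro s _
    rcases (ho s).eq_or_lt with h0 | h0
    · rw [← h0]; simp
    apply mul_le_mul_of_nonneg_left _ h0.le
    have h1 : (∑ a, x s a) ^ 2 ≤ n * ∑ a, x s a ^ 2 := by
      have := sq_sum_le_card_mul_sum_sq (s := (univ : Finset A)) (f := x s)
      simpa [hn] using this
    have h2 : ∑ a, x s a ^ 2 ≤ ∑ a, y s a := sum_le_sum fun a _ => hxy s a h0
    calc g s ^ 2 = (1 / n) ^ 2 * (∑ a, x s a) ^ 2 := by simp only [hg]; ring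
      _ ≤ (1 / n) ^ 2 * (n * ∑ a, y s a) := by gcongr; exact h1.trans (by gcongr)
      _ = _ := by field_simp
  have hF0 : 0 ≤ ∑ s, doff s * g s ^ 2 := sum_nonneg fun s _ => mul_nonneg (ho s) (sq_nonneg _)
  have A1 : ∑ s, doff s * g s ≤ Real.sqrt E := by
    apply Real.le_sqrt_of_sq_le
    refine le_trans ?_ hgE
    have := sum_sq_le_sum_mul_sum_of_sq_le_mul (s := (univ : Finset S))
      (r := fun s => doff s * g s) (f := doff) (g := fun s => doff s * g s ^ 2)
      (fun s _ => ho s) (fun s _ => mul_nonneg (ho s) (sq_nonneg _)) (fun s _ => by apply le_of_eq; ring)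
    rwa [ho1, one_mul] at this
  have A2 : ∑ s, (d s - doff s) * g s ≤ Real.sqrt (dChi2 d doff) * Real.sqrt E := by
    have hchi : 0 ≤ dChi2 d doff := sum_nonneg fun s _ => div_nonneg (sq_nonneg _) (ho s)
    rw [← Real.sqrt_mul hchi]
    apply Real.le_sqrt_of_sq_le
    have hc0 : ∀ s, 0 ≤ (d s - doff s) ^ 2 / doff s := fun s => div_nonneg (sq_nonneg _) (ho s)
    have := sum_sq_le_sum_mul_sum_of_sq_le_mul (s := (univ : Finset S))
      (r := fun s => (d s - doff s) * g s) (f := fun s => (d s - doff s) ^ 2 / doff s)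
      (g := fun s => doff s * g s ^ 2)
      (fun s _ => hc0 s) (fun s _ => mul_nonneg (ho s) (sq_nonneg _))
      (fun s _ => by
        rcases (ho s).eq_or_lt with h0 | h0
        · have : d s = 0 := by
            by_contra hc
            have := hs s (lt_of_le_of_ne (hd s) (Ne.symm hc))
            linarith
          rw [← h0, this]; simp
        · apply le_of_eq; field_simp)
    refine this.trans ?_
    exact mul_le_mul_of_nonneg_left hgE (sum_nonneg fun s _ => hc0 s)
  have e : ∑ s, d s * ∑ a, x s a = n * (∑ s, doff s * g s + ∑ s, (d s - doff s) * g s) := by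
    rw [← sum_add_distrib, mul_sum]
    apply sum_congr rfl
    intro s _
    simp only [hg]
    field_simp
    ring
  rw [e]
  nlinarith

section
variable {S A : Type*} [Fintype S] [Fintype A] (P : S → A → S → ℝ) (hP0 : ∀ s a s', 0 ≤ P s a s')
    (hP1 : ∀ s a, ∑ s' : S, P s a s' = 1)
    (μ : S → ℝ) (hμ0 : ∀ s, 0 ≤ μ s) (hμ1 : ∑ s : S, μ s = 1)
    (γ : ℝ) (hγ0 : 0 ≤ γ) (hγ1 : γ < 1)
    (π : S → A → ℝ)
    (hπ0 : ∀ s a, 0 ≤ π s a) (hπ1 : ∀ s, ∑ a : A, π s a = 1)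

lemma aux_sd0 (hP0 : ∀ s a s', 0 ≤ P s a s') (hμ0 : ∀ s, 0 ≤ μ s) (hπ0 : ∀ s a, 0 ≤ π s a)
    (t : ℕ) (s : S) : 0 ≤ stateDist P π μ t s := by
  induction t generalizing s with
  | zero => exact hμ0 s
  | succ t ih =>
    exact sum_nonneg fun s' _ => sum_nonneg fun a _ =>
      mul_nonneg (mul_nonneg (hπ0 _ _) (hP0 _ _ _)) (ih _)

lemma aux_sd1 (hP1 : ∀ s a, ∑ s' : S, P s a s' = 1) (hμ1 : ∑ s : S, μ s = 1)
    (hπ1 : ∀ s, ∑ a : A, π s a = 1) (t : ℕ) : ∑ s, stateDist P π μ t s = 1 := by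
  induction t with
  | zero => exact hμ1
  | succ t ih =>
    simp only [stateDist]
    rw [sum_comm]
    rw [← ih]
    apply sum_congr rfl
    intro s _
    rw [sum_comm]
    simp only [← sum_mul, ← mul_sum, hP1, mul_one, hπ1, one_mul]

include hP0 hP1 hμ0 hμ1 hγ0 hγ1 hπ0 hπ1

lemma aux_summable (s : S) : Summable fun t : ℕ => γ ^ t * stateDist P π μ t s := by
  refine Summable.of_nonneg_of_le
    (fun t => mul_nonneg (pow_nonneg hγ0 t) (aux_sd0 P μ π hP0 hμ0 hπ0 t s)) (fun t => ?_)
    (summable_geometric_of_lt_one hγ0 hγ1)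
  have : stateDist P π μ t s ≤ 1 := by
    rw [← aux_sd1 P μ π hP1 hμ1 hπ1 t]
    exact single_le_sum (fun i _ => aux_sd0 P μ π hP0 hμ0 hπ0 t i) (mem_univ s)
  exact mul_le_of_le_one_right (pow_nonneg hγ0 t) this

lemma aux_flow (s' : S) : (∑' t : ℕ, γ ^ t * stateDist P π μ t s') = μ s' +
    γ * ∑ s, ∑ a, π s a * P s a s' * ∑' t : ℕ, γ ^ t * stateDist P π μ t s := by
  have hsm := aux_summable P hP0 hP1 μ hμ0 hμ1 γ hγ0 hγ1 π hπ0 hπ1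
  rw [(hsm s').tsum_eq_zero_add]
  congr 1
  · simp [stateDist]
  · have : HasSum (fun t : ℕ => γ * ∑ s, ∑ a, π s a * P s a s' * (γ ^ t * stateDist P π μ t s))
        (γ * ∑ s, ∑ a, π s a * P s a s' * ∑' t : ℕ, γ ^ t * stateDist P π μ t s) :=
      (hasSum_sum fun s _ => hasSum_sum fun a _ => (hsm s).hasSum.mul_left _).mul_left _
    rw [← this.tsum_eq]
    congr 1
    ext t
    simp only [stateDist, mul_sum]
    refine sum_congr rfl fun s _ => sum_congr rfl fun a _ => ?_
    ring

lemma aux_perf (R : S → A → ℝ) : perf P R π μ γ =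
    ∑ s, ∑ a, R s a * π s a * ∑' t : ℕ, γ ^ t * stateDist P π μ t s := by
  have hsm := aux_summable P hP0 hP1 μ hμ0 hμ1 γ hγ0 hγ1 π hπ0 hπ1
  have : HasSum (fun t : ℕ => ∑ s, ∑ a, R s a * π s a * (γ ^ t * stateDist P π μ t s))
        (∑ s, ∑ a, R s a * π s a * ∑' t : ℕ, γ ^ t * stateDist P π μ t s) :=
      (hasSum_sum fun s _ => hasSum_sum fun a _ => (hsm s).hasSum.mul_left _)
  rw [← this.tsum_eq, perf]
  congr 1
  ext t
  simp only [mul_sum]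
  refine sum_congr rfl fun s _ => sum_congr rfl fun a _ => ?_
  ring

/-- Telescoping identity. -/
lemma aux_tele (R : S → A → ℝ) (V : S → ℝ) : perf P R π μ γ = ∑ s, μ s * V s +
    ∑ s, (∑' t : ℕ, γ ^ t * stateDist P π μ t s) *
      (∑ a, π s a * (R s a + γ * ∑ s', P s a s' * V s') - V s) := by
  have hf := aux_flow P hP0 hP1 μ hμ0 hμ1 γ hγ0 hγ1 π hπ0 hπ1
  rw [aux_perf P hP0 hP1 μ hμ0 hμ1 γ hγ0 hγ1 π hπ0 hπ1]
  set w : S → ℝ := fun s => ∑' t : ℕ, γ ^ t * stateDist P π μ t s with hw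
  change ∀ s', w s' = μ s' + γ * ∑ s, ∑ a, π s a * P s a s' * w s at hf
  change ∑ s, ∑ a, R s a * π s a * w s = ∑ s, μ s * V s +
    ∑ s, w s * (∑ a, π s a * (R s a + γ * ∑ s', P s a s' * V s') - V s)
  have h1 : ∑ s', w s' * V s' = ∑ s, μ s * V s
      + ∑ s, ∑ a, w s * (π s a * (γ * ∑ s', P s a s' * V s')) := by
    calc ∑ s', w s' * V s' = ∑ s', (μ s' + γ * ∑ s, ∑ a, π s a * P s a s' * w s) * V s' :=
          sum_congr rfl fun s' _ => by rw [← hf s']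
      _ = _ := by
        simp only [add_mul, sum_add_distrib, mul_sum, sum_mul]
        congr 1
        rw [sum_comm]
        refine sum_congr rfl fun s _ => ?_
        rw [sum_comm]
        refine sum_congr rfl fun a _ => sum_congr rfl fun s' _ => ?_
        ring
  simp only [mul_sub, sum_sub_distrib, h1, mul_add, sum_add_distrib]
  have : ∑ s, ∑ a, R s a * π s a * w s = ∑ s, w s * ∑ a, π s a * R s a := by
    simp only [mul_sum]
    refine sum_congr rfl fun s _ => sum_congr rfl fun a _ => ?_
    ring
  rw [this]
  simp only [← mul_sum]
  ring

omit hμ0 hμ1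
lemma aux_V (R : S → A → ℝ) (Rmax : ℝ) (hR : ∀ s a, |R s a| ≤ Rmax) [Nonempty S] :
    ∃ V : S → ℝ, (∀ s, V s = ∑ a, π s a * (R s a + γ * ∑ s', P s a s' * V s')) ∧
      ∀ s, |V s| ≤ Rmax / (1 - γ) := by
  have hav : ∀ (f : S → ℝ) (C : ℝ), (∀ s, |f s| ≤ C) → ∀ s a, |∑ s', P s a s' * f s'| ≤ C := by
    intro f C hf s a
    calc |∑ s', P s a s' * f s'| ≤ ∑ s', |P s a s' * f s'| := abs_sum_le_sum_abs _ _
      _ ≤ ∑ s', P s a s' * C := sum_le_sum fun s' _ => by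
          rw [abs_mul, abs_of_nonneg (hP0 _ _ _)]
          exact mul_le_mul_of_nonneg_left (hf s') (hP0 _ _ _)
      _ = C := by rw [← sum_mul, hP1, one_mul]
  have hap : ∀ (s : S) (f : A → ℝ) (C : ℝ), (∀ a, |f a| ≤ C) → |∑ a, π s a * f a| ≤ C := by
    intro s f C hf
    calc |∑ a, π s a * f a| ≤ ∑ a, |π s a * f a| := abs_sum_le_sum_abs _ _
      _ ≤ ∑ a, π s a * C := sum_le_sum fun a _ => by
          rw [abs_mul, abs_of_nonneg (hπ0 _ _)]
          exact mul_le_mul_of_nonneg_left (hf a) (hπ0 _ _)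
      _ = C := by rw [← sum_mul, hπ1, one_mul]
  let T : (S → ℝ) → (S → ℝ) := fun V s => ∑ a, π s a * (R s a + γ * ∑ s', P s a s' * V s')
  have hT : ContractingWith ⟨γ, hγ0⟩ T := by
    refine ⟨by exact_mod_cast hγ1, LipschitzWith.of_dist_le_mul fun V W => ?_⟩
    rw [dist_pi_le_iff (by positivity)]
    intro s
    rw [Real.dist_eq]
    have : T V s - T W s = ∑ a, π s a * (γ * ∑ s', P s a s' * (V s' - W s')) := by
      simp only [T, ← sum_sub_distrib, mul_sub]
      refine sum_congr rfl fun a _ => ?_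
      rw [sum_sub_distrib]
      ring
    rw [this]
    apply hap
    intro a
    rw [abs_mul, abs_of_nonneg hγ0]
    refine mul_le_mul_of_nonneg_left (hav _ _ (fun s' => ?_) s a) hγ0
    rw [← Real.dist_eq]
    exact dist_le_pi_dist V W s'
  obtain ⟨V, hV⟩ : ∃ V, T V = V := ⟨hT.fixedPoint, hT.fixedPoint_isFixedPt⟩
  have hV' : ∀ s, V s = ∑ a, π s a * (R s a + γ * ∑ s', P s a s' * V s') :=
    fun s => (congrFun hV s).symm
  refine ⟨V, hV', ?_⟩
  obtain ⟨s0, hs0⟩ := Finite.exists_max fun s => |V s|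
  have h1 : |V s0| ≤ Rmax + γ * |V s0| := by
    conv_lhs => rw [hV' s0]
    apply hap
    intro a
    refine (abs_add_le _ _).trans (add_le_add (hR _ _) ?_)
    rw [abs_mul, abs_of_nonneg hγ0]
    exact mul_le_mul_of_nonneg_left (hav _ _ hs0 s0 a) hγ0
  intro s
  refine (hs0 s).trans ?_
  rw [le_div_iff₀ (by linarith)]
  linarith
end

theorem off_policy_representation_bound_tv
    [Fintype S] [Fintype A] [Fintype Z] [Nonempty S] [Nonempty A] [DecidableEq Z]
    (P : S → A → S → ℝ) (hP0 : ∀ s a s', 0 ≤ P s a s')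
    (hP1 : ∀ s a, ∑ s' : S, P s a s' = 1)
    (R : S → A → ℝ) (Rmax : ℝ) (hRmax : 0 ≤ Rmax) (hR : ∀ s a, |R s a| ≤ Rmax)
    (μ : S → ℝ) (hμ0 : ∀ s, 0 ≤ μ s) (hμ1 : ∑ s : S, μ s = 1)
    (γ : ℝ) (hγ0 : 0 ≤ γ) (hγ1 : γ < 1)
    (πstar : S → A → ℝ)
    (hπs0 : ∀ s a, 0 ≤ πstar s a) (hπs1 : ∀ s, ∑ a : A, πstar s a = 1)
    (doff : S → ℝ) (hdoff0 : ∀ s, 0 ≤ doff s) (hdoff1 : ∑ s : S, doff s = 1)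
    (hsupp : ∀ s, 0 < visitation P πstar μ γ s → 0 < doff s)
    (φ : S → Z)
    (RZ : Z → A → ℝ) (hRZ : ∀ z a, |RZ z a| ≤ Rmax)
    (PZ : Z → A → S → ℝ) (hPZ0 : ∀ z a s', 0 ≤ PZ z a s')
    (hPZ1 : ∀ z a, ∑ s' : S, PZ z a s' = 1)
    (hPZpos : ∀ s a s', 0 < P s a s' → 0 < doff s → 0 < PZ (φ s) a s')
    (πZ : Z → A → ℝ) (hπZ0 : ∀ z a, 0 ≤ πZ z a) (hπZ1 : ∀ z, ∑ a : A, πZ z a = 1) :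
    perfDiff P R μ γ (fun s => πZ (φ s)) πstar ≤
      (1 + Real.sqrt (dChi2 (visitation P πstar μ γ) doff)) *
          ((Fintype.card A : ℝ) / (1 - γ) *
              Real.sqrt (∑ s : S, doff s *
                ((1 / (Fintype.card A : ℝ)) * ∑ a : A, (R s a - RZ (φ s) a) ^ 2))
            + 2 * γ * (Fintype.card A : ℝ) * Rmax / (1 - γ) ^ 2 *
              Real.sqrt ((1 / 2) * ∑ s : S, doff s *
                ((1 / (Fintype.card A : ℝ)) * ∑ a : A, dKL (P s a) (PZ (φ s) a))))
        + (2 * Rmax / (1 - γ) ^ 2) *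
            ∑ z : Z, margDist φ (visitation P πstar μ γ) z *
              dTV (margPolicy φ (visitation P πstar μ γ) πstar z) (πZ z) := by
  have h1γ : 0 < 1 - γ := by linarith
  set n : ℝ := (Fintype.card A : ℝ) with hn
  set d : S → ℝ := visitation P πstar μ γ with hd
  have hd0 : ∀ s, 0 ≤ d s := fun s => mul_nonneg h1γ.le (tsum_nonneg fun t =>
    mul_nonneg (pow_nonneg hγ0 t) (aux_sd0 P μ πstar hP0 hμ0 hπs0 t s))
  obtain ⟨V, hV, hVb⟩ := aux_V P hP0 hP1 γ hγ0 hγ1 (fun s => πZ (φ s))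
    (fun s a => hπZ0 _ _) (fun s => hπZ1 _) R Rmax hR
  have hp1 := aux_tele P hP0 hP1 μ hμ0 hμ1 γ hγ0 hγ1 (fun s => πZ (φ s))
    (fun s a => hπZ0 _ _) (fun s => hπZ1 _) R V
  have hp2 := aux_tele P hP0 hP1 μ hμ0 hμ1 γ hγ0 hγ1 πstar hπs0 hπs1 R V
  have hp1' : perf P R (fun s => πZ (φ s)) μ γ = ∑ s, μ s * V s := by
    rw [hp1]
    simp only [← hV, sub_self, mul_zero, sum_const_zero, add_zero]
  -- the three parts
  set e1 : S → A → ℝ := fun s a => R s a - RZ (φ s) a with he1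
  set e2 : S → A → ℝ := fun s a => ∑ s', (P s a s' - PZ (φ s) a s') * V s' with he2
  set Qb : Z → A → ℝ := fun z a => RZ z a + γ * ∑ s', PZ z a s' * V s' with hQb
  set D1 := ∑ s, d s * ∑ a, (πstar s a - πZ (φ s) a) * Qb (φ s) a with hD1
  set D2 := ∑ s, d s * ∑ a, (πstar s a - πZ (φ s) a) * e1 s a with hD2
  set D3 := ∑ s, d s * ∑ a, (πstar s a - πZ (φ s) a) * e2 s a with hD3
  have hdiff : (1 - γ) * (perf P R πstar μ γ - perf P R (fun s => πZ (φ s)) μ γ)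
      = D1 + D2 + γ * D3 := by
    rw [hp1', hp2, add_sub_cancel_left, mul_sum, hD1, hD2, hD3, mul_sum, ← sum_add_distrib,
      ← sum_add_distrib]
    refine sum_congr rfl fun s _ => ?_
    have hds : (1 - γ) * (∑' t : ℕ, γ ^ t * stateDist P πstar μ t s) = d s := rfl
    rw [← mul_assoc, hds, mul_left_comm γ, ← mul_add, ← mul_add]
    congr 1
    rw [hV s, mul_sum, ← sum_add_distrib, ← sum_add_distrib, ← sum_sub_distrib]
    refine sum_congr rfl fun a _ => ?_
    simp only [he1, he2, hQb, sub_mul, sum_sub_distrib]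
    ring
  have habs : ∀ s a, |πstar s a - πZ (φ s) a| ≤ 1 := by
    intro s a
    have h1 : πstar s a ≤ 1 := by
      rw [← hπs1 s]; exact single_le_sum (fun i _ => hπs0 s i) (mem_univ a)
    have h2 : πZ (φ s) a ≤ 1 := by
      rw [← hπZ1 (φ s)]; exact single_le_sum (fun i _ => hπZ0 _ i) (mem_univ a)
    rw [abs_le]
    constructor <;> linarith [hπs0 s a, hπZ0 (φ s) a]
  have hgen : ∀ e : S → A → ℝ, |∑ s, d s * ∑ a, (πstar s a - πZ (φ s) a) * e s a|
      ≤ ∑ s, d s * ∑ a, |e s a| := by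
    intro e
    refine (abs_sum_le_sum_abs _ _).trans (sum_le_sum fun s _ => ?_)
    rw [abs_mul, abs_of_nonneg (hd0 s)]
    refine mul_le_mul_of_nonneg_left ?_ (hd0 s)
    refine (abs_sum_le_sum_abs _ _).trans (sum_le_sum fun a _ => ?_)
    rw [abs_mul]
    exact mul_le_of_le_one_left (abs_nonneg _) (habs s a)
  have hB0 : 0 ≤ Rmax / (1 - γ) := by positivity
  have hD2b : |D2| ≤ (1 + Real.sqrt (dChi2 d doff)) * (n * Real.sqrt (∑ s : S, doff s *
                ((1 / n) * ∑ a : A, (R s a - RZ (φ s) a) ^ 2))) :=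
    (hgen e1).trans (aux_com d doff hd0 hdoff0 hdoff1 hsupp (fun s a => |e1 s a|)
      (fun s a => (R s a - RZ (φ s) a) ^ 2) (fun s a => abs_nonneg _)
      (fun s a _ => by rw [sq_abs]))
  have hD3b : |D3| ≤ (2 * (Rmax / (1 - γ))) * ((1 + Real.sqrt (dChi2 d doff)) *
      (n * Real.sqrt ((1 / 2) * ∑ s : S, doff s *
                ((1 / n) * ∑ a : A, dKL (P s a) (PZ (φ s) a))))) := by
    have h1 := aux_com d doff hd0 hdoff0 hdoff1 hsupp (fun s a => dTV (P s a) (PZ (φ s) a))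
      (fun s a => (1 / 2) * dKL (P s a) (PZ (φ s) a))
      (fun s a => mul_nonneg (by norm_num) (sum_nonneg fun _ _ => abs_nonneg _))
      (fun s a hs => by
        have := aux_pinsker (P s a) (PZ (φ s) a) (hP0 s a) (hPZ0 _ a) (hP1 s a) (hPZ1 _ a)
          (fun s' h => hPZpos s a s' h hs)
        rw [dTV, mul_pow]
        linarith)
    have h2 : ∑ s : S, doff s * ((1 / n) * ∑ a : A, (1 / 2) * dKL (P s a) (PZ (φ s) a))
        = (1 / 2) * ∑ s : S, doff s * ((1 / n) * ∑ a : A, dKL (P s a) (PZ (φ s) a)) := by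
      rw [mul_sum]
      refine sum_congr rfl fun s _ => ?_
      rw [← mul_sum]
      ring
    rw [← hn, h2] at h1
    refine le_trans ?_ (mul_le_mul_of_nonneg_left h1 (by positivity))
    refine (hgen e2).trans ?_
    rw [mul_sum]
    refine sum_le_sum fun s _ => ?_
    rw [mul_left_comm]
    refine mul_le_mul_of_nonneg_left ?_ (hd0 s)
    rw [mul_sum]
    refine sum_le_sum fun a _ => ?_
    calc |e2 s a| ≤ ∑ s', |(P s a s' - PZ (φ s) a s') * V s'| := abs_sum_le_sum_abs _ _
      _ ≤ ∑ s', |P s a s' - PZ (φ s) a s'| * (Rmax / (1 - γ)) := sum_le_sum fun s' _ => by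
          rw [abs_mul]
          exact mul_le_mul_of_nonneg_left (hVb s') (abs_nonneg _)
      _ = 2 * (Rmax / (1 - γ)) * dTV (P s a) (PZ (φ s) a) := by
          rw [← sum_mul, dTV]; ring
  have hQbb : ∀ z a, |Qb z a| ≤ Rmax / (1 - γ) := by
    intro z a
    have h1 : |∑ s', PZ z a s' * V s'| ≤ Rmax / (1 - γ) :=
      calc |∑ s', PZ z a s' * V s'| ≤ ∑ s', |PZ z a s' * V s'| := abs_sum_le_sum_abs _ _
        _ ≤ ∑ s', PZ z a s' * (Rmax / (1 - γ)) := sum_le_sum fun s' _ => by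
            rw [abs_mul, abs_of_nonneg (hPZ0 _ _ _)]
            exact mul_le_mul_of_nonneg_left (hVb s') (hPZ0 _ _ _)
        _ = Rmax / (1 - γ) := by rw [← sum_mul, hPZ1, one_mul]
    calc |Qb z a| ≤ |RZ z a| + |γ * ∑ s', PZ z a s' * V s'| := abs_add_le _ _
      _ ≤ Rmax + γ * (Rmax / (1 - γ)) := by
          rw [abs_mul, abs_of_nonneg hγ0]
          exact add_le_add (hRZ z a) (mul_le_mul_of_nonneg_left h1 hγ0)
      _ = Rmax / (1 - γ) := by field_simp; ring
  have hD1b : |D1| ≤ (2 * (Rmax / (1 - γ))) *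
      ∑ z : Z, margDist φ d z * dTV (margPolicy φ d πstar z) (πZ z) := by
    have hz : ∀ z a, margDist φ d z * margPolicy φ d πstar z a
        = ∑ s : S, if φ s = z then d s * πstar s a else 0 := by
      intro z a
      rw [margPolicy]
      by_cases h0 : margDist φ d z = 0
      · rw [h0, zero_mul]
        symm
        have h0' := (sum_eq_zero_iff_of_nonneg (fun s _ => by
          split_ifs
          · exact hd0 s
          · exact le_rfl)).1 h0
        refine sum_eq_zero fun s hs => ?_
        have := h0' s hs
        split_ifs at this ⊢ with hc
        · rw [this, zero_mul]
        · rfl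
      · rw [mul_div_cancel₀ _ h0]
    have hm0 : ∀ z, 0 ≤ margDist φ d z := fun z => sum_nonneg fun s _ => by
      split_ifs
      · exact hd0 s
      · exact le_rfl
    have e : D1 = ∑ z, ∑ a, margDist φ d z * (margPolicy φ d πstar z a - πZ z a) * Qb z a := by
      simp only [mul_sub, hz]
      simp only [margDist, sum_mul, ← sum_sub_distrib]
      have : ∀ z, (∑ a, ∑ s, ((if φ s = z then d s * πstar s a else 0) -
          (if φ s = z then d s else 0) * πZ z a) * Qb z a)
          = ∑ s, if φ s = z then d s * ∑ a, (πstar s a - πZ (φ s) a) * Qb (φ s) a else 0 := by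
        intro z
        rw [sum_comm]
        refine sum_congr rfl fun s _ => ?_
        split_ifs with hc
        · subst hc
          rw [mul_sum]
          refine sum_congr rfl fun a _ => ?_
          ring
        · simp
      simp only [this]
      rw [sum_comm]
      refine sum_congr rfl fun s _ => ?_
      simp
    rw [e, mul_sum]
    refine (abs_sum_le_sum_abs _ _).trans (sum_le_sum fun z _ => ?_)
    refine (abs_sum_le_sum_abs _ _).trans ?_
    calc ∑ a, |margDist φ d z * (margPolicy φ d πstar z a - πZ z a) * Qb z a|
        ≤ ∑ a, margDist φ d z * |margPolicy φ d πstar z a - πZ z a| * (Rmax / (1 - γ)) :=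
          sum_le_sum fun a _ => by
            rw [abs_mul, abs_mul, abs_of_nonneg (hm0 z)]
            exact mul_le_mul_of_nonneg_left (hQbb z a) (mul_nonneg (hm0 z) (abs_nonneg _))
      _ = _ := by rw [← sum_mul, ← mul_sum, dTV]; ring
  rw [perfDiff, abs_sub_comm]
  have hfin : (1 - γ) * |perf P R πstar μ γ - perf P R (fun s => πZ (φ s)) μ γ|
      ≤ |D1| + |D2| + γ * |D3| := by
    have : (1 - γ) * |perf P R πstar μ γ - perf P R (fun s => πZ (φ s)) μ γ|
        = |D1 + D2 + γ * D3| := by rw [← hdiff, abs_mul, abs_of_pos h1γ]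
    rw [this]
    refine (abs_add_three _ _ _).trans ?_
    rw [abs_mul, abs_of_nonneg hγ0]
  have hfin2 := hfin.trans (add_le_add (add_le_add hD1b hD2b) (mul_le_mul_of_nonneg_left hD3b hγ0))
  rw [mul_comm, ← le_div_iff₀ h1γ] at hfin2
  refine hfin2.trans (le_of_eq ?_)
  generalize Real.sqrt (dChi2 d doff) = x1
  generalize Real.sqrt _ = x2
  generalize Real.sqrt _ = x3
  generalize (∑ z : Z, _ : ℝ) = x4
  field_simp
  ring
end
end
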